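/- Let λ, μ ∈ ℝ with μ > 0 and λ + 2μ > 0, let ω > 0, set k_p = ω/√(λ + 2μ), and let n ∈ ℕ. Define the vector field P : ℝ² ∖ {0} → ℂ² by P(x) = 2 J_n'(k_p‖x‖) w(x)^n ν(x) + (2 i n J_n(k_p‖x‖)/(k_p‖x‖)) w(x)^n t(x). Then P is smooth on ℝ² ∖ {0} and satisfies both the time-harmonic Lamé equation μ ΔP(x) + (λ + μ) ∇(∇·P)(x) + ω² P(x) = 0 for all x ≠ 0, and the curl-free (p-wave) condition ∂₁P₂(x) − ∂₂P₁(x) = 0 for all x ≠ 0. -/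

import Mathlib

/-!
On `ℝ² ∖ {0}` the field `P` is the gradient of the cylindrical wave `V = (2/k) J_n(k r) e^{inθ}`,
where `k = k_p`; this is the chain rule in polar coordinates (`fderiv_pot_apply`). Hence `P` is
curl-free, and since `k² (λ + 2μ) = ω²` the Lamé equation for `P` is the gradient of the Helmholtz
equation `ΔV + k² V = 0`.

To avoid polar coordinates, `J_n(s)` is factored as `(s/2)^n g_n(s²/4)` with `g_n` entire, so that
`V = (2/k) (k/2)^n z^n g_n(k² r²/4)`, `z = x₁ + i x₂`, is a smooth function on the whole plane.
Termwise differentiation gives `g_n' = -g_{n+1}` (`hasDerivAt_besselG`), and comparing coefficients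
gives `y g_{n+2} - (n+1) g_{n+1} + g_n = 0` (`besselG_rec`), which is Bessel's equation. The
Helmholtz equation (`helmholtz_pot`) follows by the product rule, using that `z^n` is harmonic and
homogeneous of degree `n`.
-/


/-- Euclidean norm on `ℝ²` (represented as `ℝ × ℝ`). -/
noncomputable def r2 (x : ℝ × ℝ) : ℝ := Real.sqrt (x.1 ^ 2 + x.2 ^ 2)

/-- `w(x) = (x₁ + i x₂)/|x| = e^{iθ_x}` on `ℝ² ∖ {0}`. -/
noncomputable def wc (x : ℝ × ℝ) : ℂ := ((x.1 : ℂ) + Complex.I * (x.2 : ℂ)) / (r2 x : ℂ)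

/-- Bessel function of the first kind of (nonnegative integer) order `n`:
`J_n(s) = Σ_{m=0}^∞ (-1)^m/(m!(m+n)!) (s/2)^{2m+n}`. -/
noncomputable def besselJ (n : ℕ) (s : ℝ) : ℝ :=
  ∑' m : ℕ, ((-1 : ℝ) ^ m / ((m.factorial : ℝ) * ((m + n).factorial : ℝ))) *
    (s / 2) ^ (2 * m + n)

/-- First partial derivative `∂₁u` of a scalar field on `ℝ²`. -/
noncomputable def pd1 (u : ℝ × ℝ → ℂ) (x : ℝ × ℝ) : ℂ := fderiv ℝ u x (1, 0)

/-- Second partial derivative `∂₂u` of a scalar field on `ℝ²`. -/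
noncomputable def pd2 (u : ℝ × ℝ → ℂ) (x : ℝ × ℝ) : ℂ := fderiv ℝ u x (0, 1)

open scoped Topology

section Potential

open scoped ContDiff

/-! ### The entire factor of the Bessel function -/

/-- The entire function `g_n(y) = ∑ (-1)^m y^m / (m! (m+n)!)`, for which
`J_n(s) = (s/2)^n g_n(s²/4)`. -/
noncomputable def besselG (n : ℕ) (y : ℝ) : ℝ :=
  ∑' m : ℕ, ((-1 : ℝ) ^ m / ((m.factorial : ℝ) * ((m + n).factorial : ℝ))) * y ^ m

lemma besselG_coeff_abs_le (n m : ℕ) :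
    |(-1 : ℝ) ^ m / ((m.factorial : ℝ) * ((m + n).factorial : ℝ))| ≤ 1 / (m.factorial : ℝ) := by
  have h1 : (1 : ℝ) ≤ ((m + n).factorial : ℝ) := by
    exact_mod_cast Nat.one_le_iff_ne_zero.mpr (Nat.factorial_ne_zero _)
  have h2 : (0 : ℝ) < (m.factorial : ℝ) := by exact_mod_cast Nat.factorial_pos m
  rw [abs_div, abs_pow, abs_neg, abs_one, one_pow, abs_of_pos (by positivity)]
  apply one_div_le_one_div_of_le h2
  nlinarith

lemma besselG_summable (n : ℕ) (y : ℝ) :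
    Summable fun m : ℕ =>
      ((-1 : ℝ) ^ m / ((m.factorial : ℝ) * ((m + n).factorial : ℝ))) * y ^ m := by
  refine Summable.of_norm_bounded (Real.summable_pow_div_factorial |y|) fun m => ?_
  rw [Real.norm_eq_abs, abs_mul, abs_pow]
  calc _ ≤ 1 / (m.factorial : ℝ) * |y| ^ m := by
        gcongr
        exact besselG_coeff_abs_le n m
    _ = _ := by ring

/-- The coefficient of `y^(m+1)` in `g_n`, times `m + 1`, is minus the coefficient of `y^m` in
`g_{n+1}`. -/
lemma besselG_coeff_succ (n m : ℕ) :
    ((-1 : ℝ) ^ (m + 1) / (((m + 1).factorial : ℝ) * ((m + 1 + n).factorial : ℝ))) * (m + 1 : ℕ)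
      = -((-1 : ℝ) ^ m / ((m.factorial : ℝ) * ((m + (n + 1)).factorial : ℝ))) := by
  have h2 : (m.factorial : ℝ) ≠ 0 := by exact_mod_cast Nat.factorial_ne_zero m
  have h3 : ((m + (n + 1)).factorial : ℝ) ≠ 0 := by exact_mod_cast Nat.factorial_ne_zero _
  have h4 : ((m + 1 : ℕ) : ℝ) ≠ 0 := by positivity
  rw [show m + 1 + n = m + (n + 1) by ring, Nat.factorial_succ m, pow_succ]
  push_cast at h4 ⊢
  field_simp

lemma hasDerivAt_besselG (n : ℕ) (y : ℝ) : HasDerivAt (besselG n) (-besselG (n + 1) y) y := by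
  have hb : Summable fun m : ℕ => (m : ℝ) * (1 / (m.factorial : ℝ)) * (|y| + 1) ^ (m - 1) := by
    rw [← summable_nat_add_iff 1]
    refine (Real.summable_pow_div_factorial (|y| + 1)).congr fun m => ?_
    have h2 : (m.factorial : ℝ) ≠ 0 := by exact_mod_cast Nat.factorial_ne_zero m
    have h4 : (m : ℝ) + 1 ≠ 0 := by positivity
    rw [Nat.factorial_succ]
    push_cast
    field_simp
  have hy : y ∈ Metric.ball (0 : ℝ) (|y| + 1) := by simp
  have h := hasDerivAt_tsum_of_isPreconnected
    (g := fun (m : ℕ) (z : ℝ) =>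
      ((-1 : ℝ) ^ m / ((m.factorial : ℝ) * ((m + n).factorial : ℝ))) * z ^ m)
    (g' := fun (m : ℕ) (z : ℝ) =>
      ((-1 : ℝ) ^ m / ((m.factorial : ℝ) * ((m + n).factorial : ℝ))) * (m * z ^ (m - 1)))
    (t := Metric.ball (0 : ℝ) (|y| + 1)) hb Metric.isOpen_ball
    (convex_ball (0 : ℝ) _).isPreconnected
    (fun m z _ => (hasDerivAt_pow m z).const_mul _)
    (fun m z hz => by
      have hz' : |z| ≤ |y| + 1 := by simpa using (Metric.mem_ball.mp hz).le
      rw [Real.norm_eq_abs, abs_mul, abs_mul, abs_pow, Nat.abs_cast]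
      calc _ ≤ 1 / (m.factorial : ℝ) * (m * (|y| + 1) ^ (m - 1)) := by
            gcongr
            exact besselG_coeff_abs_le n m
        _ = _ := by ring)
    hy (besselG_summable n y) hy
  refine (show HasDerivAt (besselG n) _ y from h).congr_deriv ?_
  have hs : Summable fun m : ℕ => ((-1 : ℝ) ^ m / ((m.factorial : ℝ) * ((m + n).factorial : ℝ))) *
      (m * y ^ (m - 1)) := by
    rw [← summable_nat_add_iff 1]
    refine (besselG_summable (n + 1) y).neg.congr fun m => ?_
    rw [← mul_assoc, besselG_coeff_succ, Nat.add_sub_cancel, neg_mul]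
  rw [hs.tsum_eq_zero_add, besselG, ← tsum_neg]
  simp only [Nat.cast_zero, zero_mul, mul_zero, zero_add]
  refine tsum_congr fun m => ?_
  rw [← mul_assoc, besselG_coeff_succ, Nat.add_sub_cancel, neg_mul]

lemma contDiff_besselG (n : ℕ) : ContDiff ℝ ∞ (besselG n) := by
  refine contDiff_infty.mpr fun k => ?_
  induction k generalizing n with
  | zero =>
    exact contDiff_zero.mpr
      (continuous_iff_continuousAt.mpr fun y => (hasDerivAt_besselG n y).continuousAt)
  | succ k ih =>
    have hd : deriv (besselG n) = fun y => -besselG (n + 1) y :=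
      funext fun y => (hasDerivAt_besselG n y).deriv
    push_cast
    rw [contDiff_succ_iff_deriv]
    refine ⟨fun y => (hasDerivAt_besselG n y).differentiableAt, by simp, ?_⟩
    rw [hd]
    exact (ih (n + 1)).neg

/-- Bessel's equation for `g_n`: since `g_n' = -g_{n+1}`, this says `y g'' + (n+1) g' + g = 0`. -/
lemma besselG_rec (n : ℕ) (y : ℝ) :
    y * besselG (n + 2) y - (n + 1) * besselG (n + 1) y + besselG n y = 0 := by
  have h0 := (besselG_summable n y).hasSum
  have h1 := (besselG_summable (n + 1) y).hasSum
  have h2 := (besselG_summable (n + 2) y).hasSum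
  -- the shifted series of `y * g_{n+2}`, whose zeroth coefficient vanishes
  have h3 : HasSum (fun m : ℕ =>
      -((m : ℝ) * ((-1 : ℝ) ^ m / ((m.factorial : ℝ) * ((m + (n + 1)).factorial : ℝ))) * y ^ m))
      (y * besselG (n + 2) y) := by
    rw [← hasSum_nat_add_iff' 1]
    simp only [Finset.range_one, Finset.sum_singleton, Nat.cast_zero, zero_mul, neg_zero, sub_zero]
    refine (h2.mul_left y).congr_fun fun m => ?_
    have h := besselG_coeff_succ (n + 1) m
    rw [mul_comm ((m + 1 : ℕ) : ℝ), h]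
    ring
  have h4 := (h3.sub (h1.mul_left ((n : ℝ) + 1))).add h0
  refine h4.unique ?_
  refine (hasSum_zero).congr_fun fun m => ?_
  have e2 : (m.factorial : ℝ) ≠ 0 := by exact_mod_cast Nat.factorial_ne_zero m
  have e3 : ((m + n).factorial : ℝ) ≠ 0 := by exact_mod_cast Nat.factorial_ne_zero _
  have e4 : (m : ℝ) + n + 1 ≠ 0 := by positivity
  rw [← add_assoc m n 1, Nat.factorial_succ (m + n)]
  push_cast
  field_simp
  ring

lemma besselJ_eq (n : ℕ) (s : ℝ) : besselJ n s = (s / 2) ^ n * besselG n (s ^ 2 / 4) := by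
  rw [besselJ, besselG, ← tsum_mul_left]
  refine tsum_congr fun m => ?_
  rw [pow_add, pow_mul, show (s / 2) ^ 2 = s ^ 2 / 4 by ring]
  ring

lemma deriv_besselJ (n : ℕ) {s : ℝ} (hs : s ≠ 0) :
    deriv (besselJ n) s =
      (s / 2) ^ n * (n / s * besselG n (s ^ 2 / 4) - s / 2 * besselG (n + 1) (s ^ 2 / 4)) := by
  have h1 : HasDerivAt (fun s : ℝ => (s / 2) ^ n) (n * (s / 2) ^ (n - 1) * (1 / 2)) s :=
    ((hasDerivAt_id s).div_const 2).pow n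
  have h2 : HasDerivAt (fun s : ℝ => s ^ 2 / 4) (s / 2) s := by
    refine ((hasDerivAt_pow 2 s).div_const 4).congr_deriv ?_
    norm_num
    ring
  have h3 := h1.mul ((hasDerivAt_besselG n (s ^ 2 / 4)).comp s h2)
  rw [show besselJ n = fun s => (s / 2) ^ n * besselG n (s ^ 2 / 4) from
    funext (besselJ_eq n)]
  refine h3.deriv.trans ?_
  rcases n with _ | n
  · simp
    ring
  · simp only [Nat.add_sub_cancel, Function.comp_apply]
    field_simp
    ring

/-! ### The cylindrical wave `J_n(k r) e^{inθ}` -/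

/-- The complex coordinate `x₁ + i x₂`. -/
noncomputable def zc (x : ℝ × ℝ) : ℂ := (x.1 : ℂ) + Complex.I * (x.2 : ℂ)

/-- The composite `g_m(c (x₁² + x₂²))`, complex-valued. -/
noncomputable def radG (c : ℝ) (m : ℕ) (x : ℝ × ℝ) : ℂ :=
  ((besselG m (c * (x.1 ^ 2 + x.2 ^ 2)) : ℝ) : ℂ)

/-- The scalar potential `(2/k) J_n(k r) e^{inθ}`, written in the form
`(2/k) (k/2)^n z^n g_n(k² r²/4)`, which is smooth across the origin. -/
noncomputable def pot (k : ℝ) (n : ℕ) (x : ℝ × ℝ) : ℂ :=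
  ((2 / k * (k / 2) ^ n : ℝ) : ℂ) * (zc x ^ n * radG (k ^ 2 / 4) n x)

lemma hasFDerivAt_zc (x : ℝ × ℝ) :
    HasFDerivAt zc (Complex.ofRealCLM.comp (ContinuousLinearMap.fst ℝ ℝ ℝ) +
      Complex.I • Complex.ofRealCLM.comp (ContinuousLinearMap.snd ℝ ℝ ℝ)) x := by
  exact (Complex.ofRealCLM.comp (ContinuousLinearMap.fst ℝ ℝ ℝ) +
      Complex.I • Complex.ofRealCLM.comp (ContinuousLinearMap.snd ℝ ℝ ℝ)).hasFDerivAt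

lemma contDiff_zc : ContDiff ℝ ∞ zc :=
  (Complex.ofRealCLM.comp (ContinuousLinearMap.fst ℝ ℝ ℝ) +
      Complex.I • Complex.ofRealCLM.comp (ContinuousLinearMap.snd ℝ ℝ ℝ)).contDiff

lemma contDiff_radG (c : ℝ) (m : ℕ) : ContDiff ℝ ∞ (radG c m) := by
  have h : ContDiff ℝ ∞ fun x : ℝ × ℝ => c * (x.1 ^ 2 + x.2 ^ 2) := by fun_prop
  exact Complex.ofRealCLM.contDiff.comp ((contDiff_besselG m).comp h)

lemma contDiff_pot (k : ℝ) (n : ℕ) : ContDiff ℝ ∞ (pot k n) :=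
  contDiff_const.mul ((contDiff_zc.pow n).mul (contDiff_radG _ n))

lemma fderiv_zc_apply (x e : ℝ × ℝ) : fderiv ℝ zc x e = zc e := by
  rw [(hasFDerivAt_zc x).fderiv]
  simp [zc]

lemma fderiv_radG_apply (c : ℝ) (m : ℕ) (x e : ℝ × ℝ) :
    fderiv ℝ (radG c m) x e =
      -(2 * c * (x.1 * e.1 + x.2 * e.2) : ℝ) * radG c (m + 1) x := by
  have h1 : HasFDerivAt (fun x : ℝ × ℝ => c * (x.1 ^ 2 + x.2 ^ 2)) _ x :=
    (((hasFDerivAt_fst (𝕜 := ℝ) (p := x)).pow 2).add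
      ((hasFDerivAt_snd (𝕜 := ℝ) (p := x)).pow 2)).const_mul c
  have h2 := (hasDerivAt_besselG m (c * (x.1 ^ 2 + x.2 ^ 2))).comp_hasFDerivAt x h1
  have h3 : HasFDerivAt (radG c m) _ x := Complex.ofRealCLM.hasFDerivAt.comp x h2
  rw [h3.fderiv]
  simp [radG]
  ring

/-- Derivative of `z^n g_m(c r²)` in the direction `e`. -/
lemma fderiv_wave_apply (c : ℝ) (n m : ℕ) (x e : ℝ × ℝ) :
    fderiv ℝ (fun x => zc x ^ n * radG c m x) x e =
      n * zc x ^ (n - 1) * zc e * radG c m x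
        - (2 * c * (x.1 * e.1 + x.2 * e.2) : ℝ) * (zc x ^ n * radG c (m + 1) x) := by
  have hz : DifferentiableAt ℝ zc x := (hasFDerivAt_zc x).differentiableAt
  have hg : DifferentiableAt ℝ (radG c m) x := (contDiff_radG c m).differentiable (by simp) x
  rw [fderiv_fun_mul (hz.fun_pow n) hg]
  simp only [add_apply, smul_apply, fderiv_radG_apply]
  rw [fderiv_fun_pow n hz]
  simp only [smul_apply, fderiv_zc_apply, smul_eq_mul, nsmul_eq_mul]
  ring

/-- Second derivative of `z^n g_n(c r²)` in the direction `e`. -/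
lemma fderiv_fderiv_wave_apply (c : ℝ) (n : ℕ) (x e : ℝ × ℝ) :
    fderiv ℝ (fun x => fderiv ℝ (fun x => zc x ^ n * radG c n x) x e) x e =
      n * ((n - 1 : ℕ) : ℂ) * zc x ^ (n - 1 - 1) * zc e ^ 2 * radG c n x
        - 2 * (2 * c * (x.1 * e.1 + x.2 * e.2) : ℝ) * zc e
            * (n * zc x ^ (n - 1)) * radG c (n + 1) x
        - (2 * c * (e.1 ^ 2 + e.2 ^ 2) : ℝ) * zc x ^ n * radG c (n + 1) x
        + (2 * c * (x.1 * e.1 + x.2 * e.2) : ℝ) ^ 2 * zc x ^ n * radG c (n + 2) x := by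
  have hl : HasFDerivAt (fun x : ℝ × ℝ => ((2 * c * (x.1 * e.1 + x.2 * e.2) : ℝ) : ℂ)) _ x :=
    Complex.ofRealCLM.hasFDerivAt.comp x
      ((((hasFDerivAt_fst (𝕜 := ℝ) (p := x)).mul_const e.1).add
        ((hasFDerivAt_snd (𝕜 := ℝ) (p := x)).mul_const e.2)).const_mul (2 * c))
  have hd (p q : ℕ) : DifferentiableAt ℝ (fun x => zc x ^ p * radG c q x) x :=
    ((contDiff_zc.pow p).mul (contDiff_radG c q)).differentiable (by simp) x
  have hfun : (fun x => fderiv ℝ (fun x => zc x ^ n * radG c n x) x e) = fun x =>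
      (n * zc e) * (zc x ^ (n - 1) * radG c n x)
        - ((2 * c * (x.1 * e.1 + x.2 * e.2) : ℝ) : ℂ) * (zc x ^ n * radG c (n + 1) x) := by
    funext y
    rw [fderiv_wave_apply]
    ring
  rw [hfun, fderiv_fun_sub ((hd _ _).const_mul _) (hl.differentiableAt.fun_mul (hd _ _)),
    fderiv_const_mul (hd _ _), fderiv_fun_mul hl.differentiableAt (hd _ _), hl.fderiv]
  simp only [sub_apply, add_apply,
    smul_apply, fderiv_wave_apply, smul_eq_mul]
  simp
  ring

/-- The potential solves the Helmholtz equation `Δu + k² u = 0` on the whole plane. -/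
lemma helmholtz_pot (k : ℝ) (n : ℕ) (x : ℝ × ℝ) :
    pd1 (pd1 (pot k n)) x + pd2 (pd2 (pot k n)) x = -(k : ℂ) ^ 2 * pot k n x := by
  have hw : ContDiff ℝ ∞ fun x => zc x ^ n * radG (k ^ 2 / 4) n x :=
    (contDiff_zc.pow n).mul (contDiff_radG _ n)
  have hsecond (e : ℝ × ℝ) : fderiv ℝ (fun x => fderiv ℝ (pot k n) x e) x e =
      ((2 / k * (k / 2) ^ n : ℝ) : ℂ) *
        fderiv ℝ (fun x => fderiv ℝ (fun x => zc x ^ n * radG (k ^ 2 / 4) n x) x e) x e := by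
    have h1 : (fun x => fderiv ℝ (pot k n) x e) = fun x => ((2 / k * (k / 2) ^ n : ℝ) : ℂ) *
        fderiv ℝ (fun x => zc x ^ n * radG (k ^ 2 / 4) n x) x e := by
      funext y
      change fderiv ℝ (fun x => _ * (zc x ^ n * radG (k ^ 2 / 4) n x)) y e = _
      rw [fderiv_const_mul (hw.differentiable (by simp) y)]
      rfl
    have h2 : ContDiff ℝ ∞
        fun x => fderiv ℝ (fun x => zc x ^ n * radG (k ^ 2 / 4) n x) x e :=
      (hw.fderiv_right (m := ∞) (by simp)).clm_apply contDiff_const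
    rw [h1, fderiv_const_mul (h2.differentiable (by simp) x)]
    rfl
  have hode := besselG_rec n (k ^ 2 / 4 * (x.1 ^ 2 + x.2 ^ 2))
  have hode' := congrArg (fun t : ℝ => (t : ℂ)) hode
  push_cast at hode'
  have hz : (n : ℂ) * zc x ^ (n - 1) * zc x = n * zc x ^ n := by
    rcases n with _ | n
    · simp
    · simp [pow_succ, mul_assoc]
  change fderiv ℝ (fun x => fderiv ℝ (pot k n) x (1, 0)) x (1, 0) +
    fderiv ℝ (fun x => fderiv ℝ (pot k n) x (0, 1)) x (0, 1) = _
  rw [hsecond, hsecond, fderiv_fderiv_wave_apply, fderiv_fderiv_wave_apply, pot]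
  have e1 : zc (1, 0) = 1 := by simp [zc]
  have e2 : zc (0, 1) = Complex.I := by simp [zc]
  rw [e1, e2, Complex.I_sq]
  have e3 : zc x = (x.1 : ℂ) + Complex.I * x.2 := rfl
  set Z := zc x ^ n
  set Y := zc x ^ (n - 1)
  have r0 : ((besselG n (k ^ 2 / 4 * (x.1 ^ 2 + x.2 ^ 2)) : ℝ) : ℂ) = radG (k ^ 2 / 4) n x := rfl
  have r1 : ((besselG (n + 1) (k ^ 2 / 4 * (x.1 ^ 2 + x.2 ^ 2)) : ℝ) : ℂ)
    = radG (k ^ 2 / 4) (n + 1) x := rfl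
  have r2 : ((besselG (n + 2) (k ^ 2 / 4 * (x.1 ^ 2 + x.2 ^ 2)) : ℝ) : ℂ)
    = radG (k ^ 2 / 4) (n + 2) x := rfl
  rw [r0, r1, r2] at hode'
  rw [e3] at hz
  push_cast
  linear_combination (2 / (k : ℂ) * (k / 2) ^ n) * ((k : ℂ) ^ 2 * Z * hode'
    - (k : ℂ) ^ 2 * radG (k ^ 2 / 4) (n + 1) x * hz)

/-! ### The p-wave field as a gradient -/

lemma contDiff_pd1 {u : ℝ × ℝ → ℂ} (hu : ContDiff ℝ ∞ u) : ContDiff ℝ ∞ (pd1 u) :=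
  (hu.fderiv_right (m := ∞) (by simp)).clm_apply contDiff_const

lemma contDiff_pd2 {u : ℝ × ℝ → ℂ} (hu : ContDiff ℝ ∞ u) : ContDiff ℝ ∞ (pd2 u) :=
  (hu.fderiv_right (m := ∞) (by simp)).clm_apply contDiff_const

lemma pd_comm {u : ℝ × ℝ → ℂ} (hu : ContDiff ℝ ∞ u) : pd1 (pd2 u) = pd2 (pd1 u) := by
  funext x
  have hd : DifferentiableAt ℝ (fderiv ℝ u) x :=
    (hu.fderiv_right (m := ∞) (by simp)).differentiable (by simp) x
  have key (a b : ℝ × ℝ) : fderiv ℝ (fun x => fderiv ℝ u x a) x b =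
      fderiv ℝ (fderiv ℝ u) x b a := by
    rw [fderiv_clm_apply hd (differentiableAt_const a)]
    simp
  have hs : IsSymmSndFDerivAt ℝ u x := hu.contDiffAt.isSymmSndFDerivAt (by
    rw [minSmoothness_of_isRCLikeNormedField]
    exact WithTop.coe_le_coe.mpr (le_top : (2 : ℕ∞) ≤ ⊤))
  change fderiv ℝ (fun x => fderiv ℝ u x (0, 1)) x (1, 0) =
    fderiv ℝ (fun x => fderiv ℝ u x (1, 0)) x (0, 1)
  rw [key, key]
  exact hs.eq _ _

lemma pd1_congr {u v : ℝ × ℝ → ℂ} {x : ℝ × ℝ} (h : u =ᶠ[𝓝 x] v) : pd1 u =ᶠ[𝓝 x] pd1 v :=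
  (h.fderiv (𝕜 := ℝ)).mono fun y hy => by simp only [pd1, hy]

lemma pd2_congr {u v : ℝ × ℝ → ℂ} {x : ℝ × ℝ} (h : u =ᶠ[𝓝 x] v) : pd2 u =ᶠ[𝓝 x] pd2 v :=
  (h.fderiv (𝕜 := ℝ)).mono fun y hy => by simp only [pd2, hy]

lemma pd1_add {u v : ℝ × ℝ → ℂ} (hu : ContDiff ℝ ∞ u) (hv : ContDiff ℝ ∞ v) (x : ℝ × ℝ) :
    pd1 (fun y => u y + v y) x = pd1 u x + pd1 v x := by
  simp only [pd1, fderiv_fun_add (hu.differentiable (by simp) x) (hv.differentiable (by simp) x),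
    add_apply]

lemma pd2_add {u v : ℝ × ℝ → ℂ} (hu : ContDiff ℝ ∞ u) (hv : ContDiff ℝ ∞ v) (x : ℝ × ℝ) :
    pd2 (fun y => u y + v y) x = pd2 u x + pd2 v x := by
  simp only [pd2, fderiv_fun_add (hu.differentiable (by simp) x) (hv.differentiable (by simp) x),
    add_apply]

lemma pd1_const_mul {u : ℝ × ℝ → ℂ} (hu : ContDiff ℝ ∞ u) (a : ℂ) (x : ℝ × ℝ) :
    pd1 (fun y => a * u y) x = a * pd1 u x := by
  simp only [pd1, fderiv_const_mul (hu.differentiable (by simp) x),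
    smul_apply, smul_eq_mul]

lemma pd2_const_mul {u : ℝ × ℝ → ℂ} (hu : ContDiff ℝ ∞ u) (a : ℂ) (x : ℝ × ℝ) :
    pd2 (fun y => a * u y) x = a * pd2 u x := by
  simp only [pd2, fderiv_const_mul (hu.differentiable (by simp) x),
    smul_apply, smul_eq_mul]

lemma r2_pos {x : ℝ × ℝ} (hx : x ≠ 0) : 0 < r2 x := by
  apply Real.sqrt_pos.mpr
  by_contra! h
  apply hx
  ext
  · simp only [Prod.fst_zero]; nlinarith [sq_nonneg x.1, sq_nonneg x.2]
  · simp only [Prod.snd_zero]; nlinarith [sq_nonneg x.1, sq_nonneg x.2]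

/-- Derivative of the potential in the direction `e`, away from the origin, in polar form:
`2 J_n' e^{inθ} (ν·e) + (2in J_n / (k r)) e^{inθ} (t·e)`. -/
lemma fderiv_pot_apply {k : ℝ} (hk : 0 < k) (n : ℕ) {x : ℝ × ℝ} (hx : x ≠ 0) (e : ℝ × ℝ) :
    fderiv ℝ (pot k n) x e =
      (2 * ((deriv (besselJ n) (k * r2 x) : ℝ) : ℂ)) * wc x ^ n
          * (((x.1 * e.1 + x.2 * e.2) / r2 x : ℝ) : ℂ)
        + (2 * Complex.I * (n : ℂ) * (besselJ n (k * r2 x) : ℂ) / ((k * r2 x : ℝ) : ℂ))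
          * wc x ^ n * (((-x.2 * e.1 + x.1 * e.2) / r2 x : ℝ) : ℂ) := by
  have hr := r2_pos hx
  have hr2 : r2 x ^ 2 = x.1 ^ 2 + x.2 ^ 2 := Real.sq_sqrt (by positivity)
  have hw : ContDiff ℝ ∞ fun x => zc x ^ n * radG (k ^ 2 / 4) n x :=
    (contDiff_zc.pow n).mul (contDiff_radG _ n)
  have harg : (k * r2 x) ^ 2 / 4 = k ^ 2 / 4 * (x.1 ^ 2 + x.2 ^ 2) := by
    rw [mul_pow, hr2]; ring
  have hL : fderiv ℝ (pot k n) x e = ((2 / k * (k / 2) ^ n : ℝ) : ℂ) *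
      (n * zc x ^ (n - 1) * zc e * radG (k ^ 2 / 4) n x
        - (2 * (k ^ 2 / 4) * (x.1 * e.1 + x.2 * e.2) : ℝ)
          * (zc x ^ n * radG (k ^ 2 / 4) (n + 1) x)) := by
    rw [← fderiv_wave_apply]
    change fderiv ℝ (fun x => _ * (zc x ^ n * radG (k ^ 2 / 4) n x)) x e = _
    rw [fderiv_const_mul (hw.differentiable (by simp) x)]
    rfl
  have hwc : wc x = zc x / (r2 x : ℂ) := rfl
  have hrc : (r2 x : ℂ) ≠ 0 := by exact_mod_cast hr.ne'
  have hkc : (k : ℂ) ≠ 0 := by exact_mod_cast hk.ne'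
  have hz : (n : ℂ) * zc x ^ n = n * zc x ^ (n - 1) * zc x := by
    rcases n with _ | n
    · simp
    · simp [pow_succ, mul_assoc]
  have hr2c : (r2 x : ℂ) ^ 2 = (x.1 : ℂ) ^ 2 + (x.2 : ℂ) ^ 2 := by exact_mod_cast hr2
  -- `z ((x·e) + i (x^⊥·e)) = r² (e₁ + i e₂)`, where `x^⊥ = (-x₂, x₁)`
  have hid : (n : ℂ) * zc x ^ n * ((x.1 * e.1 + x.2 * e.2) + Complex.I * (-x.2 * e.1 + x.1 * e.2))
      = n * zc x ^ (n - 1) * zc e * (r2 x : ℂ) ^ 2 := by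
    rw [hz, hr2c, zc, zc]
    linear_combination (n * (x.1 + Complex.I * x.2) ^ (n - 1) *
      (x.2 * (-x.2 * e.1 + x.1 * e.2)) : ℂ) * Complex.I_sq
  rw [hL, deriv_besselJ n (by positivity), besselJ_eq, harg, hwc]
  have r0 : ((besselG n (k ^ 2 / 4 * (x.1 ^ 2 + x.2 ^ 2)) : ℝ) : ℂ) = radG (k ^ 2 / 4) n x := rfl
  have r1 : ((besselG (n + 1) (k ^ 2 / 4 * (x.1 ^ 2 + x.2 ^ 2)) : ℝ) : ℂ)
    = radG (k ^ 2 / 4) (n + 1) x := rfl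
  rw [← r0, ← r1]
  push_cast
  have hid' : (n : ℂ) * zc x ^ (n - 1) * zc e = n * zc x ^ n *
    ((x.1 * e.1 + x.2 * e.2) + Complex.I * (-x.2 * e.1 + x.1 * e.2)) / (r2 x : ℂ) ^ 2 := by
    rw [hid]; field_simp
  rw [hid']
  generalize ((besselG n (k ^ 2 / 4 * (x.1 ^ 2 + x.2 ^ 2)) : ℝ) : ℂ) = G0
  generalize ((besselG (n + 1) (k ^ 2 / 4 * (x.1 ^ 2 + x.2 ^ 2)) : ℝ) : ℂ) = G1
  rw [div_pow, div_pow, div_pow, mul_pow]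
  field_simp
  ring

end Potential

/-- The p-wave field `P_n^i(k_p|x|) = 2 J_n'(k_p|x|) e^{inθ}ν + (2in J_n(k_p|x|)/(k_p|x|)) e^{inθ}t`
is smooth on `ℝ² ∖ {0}`, satisfies the time-harmonic Lamé equation
`μΔP + (λ+μ)∇(∇·P) + ω²P = 0` there, and is curl-free: `∂₁P₂ - ∂₂P₁ = 0`. -/
theorem stmt10 (lam mu : ℝ) (hmu : 0 < mu) (hconv : 0 < lam + 2 * mu)
    (ω : ℝ) (hω : 0 < ω) (n : ℕ) :
    let kp : ℝ := ω / Real.sqrt (lam + 2 * mu)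
    let P : ℝ × ℝ → ℂ × ℂ := fun x =>
      ((2 * ((deriv (besselJ n) (kp * r2 x) : ℝ) : ℂ)) * wc x ^ n * ((x.1 / r2 x : ℝ) : ℂ)
         + (2 * Complex.I * (n : ℂ) * (besselJ n (kp * r2 x) : ℂ) / ((kp * r2 x : ℝ) : ℂ))
             * wc x ^ n * ((-x.2 / r2 x : ℝ) : ℂ),
       (2 * ((deriv (besselJ n) (kp * r2 x) : ℝ) : ℂ)) * wc x ^ n * ((x.2 / r2 x : ℝ) : ℂ)
         + (2 * Complex.I * (n : ℂ) * (besselJ n (kp * r2 x) : ℂ) / ((kp * r2 x : ℝ) : ℂ))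
             * wc x ^ n * ((x.1 / r2 x : ℝ) : ℂ))
    let P1 : ℝ × ℝ → ℂ := fun x => (P x).1
    let P2 : ℝ × ℝ → ℂ := fun x => (P x).2
    let divP : ℝ × ℝ → ℂ := fun x => pd1 P1 x + pd2 P2 x
    ContDiffOn ℝ (⊤ : ℕ∞) P {(0 : ℝ × ℝ)}ᶜ
    ∧ (∀ x : ℝ × ℝ, x ≠ 0 →
        (mu : ℂ) * (pd1 (pd1 P1) x + pd2 (pd2 P1) x)
          + ((lam + mu : ℝ) : ℂ) * pd1 divP x + ((ω ^ 2 : ℝ) : ℂ) * P1 x = 0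
        ∧ (mu : ℂ) * (pd1 (pd1 P2) x + pd2 (pd2 P2) x)
          + ((lam + mu : ℝ) : ℂ) * pd2 divP x + ((ω ^ 2 : ℝ) : ℂ) * P2 x = 0)
    ∧ (∀ x : ℝ × ℝ, x ≠ 0 → pd1 P2 x - pd2 P1 x = 0) := by
  intro kp P P1 P2 divP
  have hk : 0 < kp := div_pos hω (Real.sqrt_pos.mpr hconv)
  have hk2 : kp ^ 2 * (lam + 2 * mu) = ω ^ 2 := by
    rw [div_pow, Real.sq_sqrt hconv.le]
    field_simp
  set V := pot kp n with hV
  have sV : ContDiff ℝ (⊤ : ℕ∞) V := contDiff_pot kp n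
  have s1 := contDiff_pd1 sV
  have s2 := contDiff_pd2 sV
  have h1 : ∀ x : ℝ × ℝ, x ≠ 0 → P1 x = pd1 V x := fun x hx => by
    rw [pd1, hV, fderiv_pot_apply hk n hx]
    simp [P1, P]
  have h2 : ∀ x : ℝ × ℝ, x ≠ 0 → P2 x = pd2 V x := fun x hx => by
    rw [pd2, hV, fderiv_pot_apply hk n hx]
    simp [P2, P]
  have ev1 : ∀ x : ℝ × ℝ, x ≠ 0 → P1 =ᶠ[𝓝 x] pd1 V := fun x hx =>
    (isOpen_ne.eventually_mem hx).mono h1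
  have ev2 : ∀ x : ℝ × ℝ, x ≠ 0 → P2 =ᶠ[𝓝 x] pd2 V := fun x hx =>
    (isOpen_ne.eventually_mem hx).mono h2
  have hH : (fun x => pd1 (pd1 V) x + pd2 (pd2 V) x) = fun x => -(kp : ℂ) ^ 2 * V x :=
    funext (helmholtz_pot kp n)
  have evd : ∀ x : ℝ × ℝ, x ≠ 0 → divP =ᶠ[𝓝 x] fun x => -(kp : ℂ) ^ 2 * V x := fun x hx => by
    rw [← hH]
    exact (pd1_congr (ev1 x hx)).add (pd2_congr (ev2 x hx))
  have hk2c : (kp : ℂ) ^ 2 * (lam + 2 * mu) = (ω : ℂ) ^ 2 := by exact_mod_cast hk2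
  refine ⟨?_, fun x hx => ⟨?_, ?_⟩, fun x hx => ?_⟩
  · refine (s1.prodMk s2).contDiffOn.congr fun x hx => ?_
    exact Prod.ext (h1 x hx) (h2 x hx)
  · -- `Δ ∂₁V = ∂₁ ΔV = -k² ∂₁V`
    have hL : pd1 (pd1 (pd1 V)) x + pd2 (pd2 (pd1 V)) x = -(kp : ℂ) ^ 2 * pd1 V x := by
      rw [← pd1_const_mul sV, ← hH, pd1_add (contDiff_pd1 s1) (contDiff_pd2 s2), ← pd_comm sV,
        pd_comm s2]
    rw [(pd1_congr (pd1_congr (ev1 x hx))).eq_of_nhds,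
      (pd2_congr (pd2_congr (ev1 x hx))).eq_of_nhds, (pd1_congr (evd x hx)).eq_of_nhds,
      h1 x hx, hL, pd1_const_mul sV]
    push_cast
    linear_combination -pd1 V x * hk2c
  · have hL : pd1 (pd1 (pd2 V)) x + pd2 (pd2 (pd2 V)) x = -(kp : ℂ) ^ 2 * pd2 V x := by
      rw [← pd2_const_mul sV, ← hH, pd2_add (contDiff_pd1 s1) (contDiff_pd2 s2), pd_comm sV,
        pd_comm s1]
    rw [(pd1_congr (pd1_congr (ev2 x hx))).eq_of_nhds,
      (pd2_congr (pd2_congr (ev2 x hx))).eq_of_nhds, (pd2_congr (evd x hx)).eq_of_nhds,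
      h2 x hx, hL, pd2_const_mul sV]
    push_cast
    linear_combination -pd2 V x * hk2c
  · rw [(pd1_congr (ev2 x hx)).eq_of_nhds, (pd2_congr (ev1 x hx)).eq_of_nhds, pd_comm sV, sub_self]
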